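/- Let d ≥ 1 and let 𝓕 be a family of n hyperplanes in general position in ℝ^d. Then there exists a point x ∈ ℝ^d such that every ray starting at x intersects at least ⌊(n+d)/(d+1)⌋ of the hyperplanes of 𝓕. -/

import Mathlib

open scoped InnerProductSpace

/-- A hyperplane in `ℝ^d`: an affine subspace of dimension `d-1`, i.e. the solution
set of one nontrivial linear equation. -/
def IsHyperplane {d : ℕ} (h : Set (EuclideanSpace ℝ (Fin d))) : Prop :=
  ∃ (v : EuclideanSpace ℝ (Fin d)) (c : ℝ), v ≠ 0 ∧ h = {y | ⟪y, v⟫_ℝ = c}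

/-- A family of hyperplanes in `ℝ^d` is in general position if any `d` of them have
exactly one point in common and any `d+1` of them have no common point. -/
def InGeneralPosition {d n : ℕ} (H : Fin n → Set (EuclideanSpace ℝ (Fin d))) : Prop :=
  (∀ s : Finset (Fin n), s.card = d → ∃! x, ∀ i ∈ s, x ∈ H i) ∧
  (∀ s : Finset (Fin n), s.card = d + 1 → ¬ ∃ x, ∀ i ∈ s, x ∈ H i)

/-- The ray starting at `x` in direction `u`. -/
def Ray {d : ℕ} (x u : EuclideanSpace ℝ (Fin d)) : Set (EuclideanSpace ℝ (Fin d)) :=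
  {y | ∃ t : ℝ, 0 ≤ t ∧ y = x + t • u}

/-!
Fix a point `x` and call a hyperplane *approached* in direction `u` if the ray from `x` in direction
`u` does not move strictly away from it. If `0` is a convex combination of directions, every
hyperplane is approached in one of them, and by Carathéodory at most `d + 1` of them are needed; so
one of these directions approaches at least `n / (d + 1)` hyperplanes. Let `n ≥ d ^ 2`; for smaller
`n` a common point of `d` hyperplanes (of one, if `n < d`) will do. If every point `x` had a
direction approaching fewer, these bad directions would form sets `U x` with open fibres, and
`x ∈ U x` for `x` far away, as moving away from the origin then approaches fewer than `d`
hyperplanes. A Browder-type selection argument gives `x` with `0 ∈ convexHull (U x)`, a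
contradiction. Finally a ray meets every hyperplane approached by a suitable small perturbation of
its direction, which takes care of the hyperplanes parallel to it.

The selection argument patches local selections together by a partition of unity into a `C¹` vector
field equal to the identity near infinity, and such a field has a zero. This follows from the
Milnor–Rogers proof of the no-retraction theorem: if `g` vanishes on the boundary of `s`, then
`id + t • g` is a bijection of `s` for small `t`, so the polynomial `∫ₛ det (id + t • Dg)` in `t` is
constantly the volume of `s`, whereas a retraction has vanishing Jacobian.
-/

open Filter Module MeasureTheory Polynomial Set
open scoped Finset Manifold NNReal Topology

section PolynomialFamilies

theorem eval_eq_sum_eval_lagrange_basis {F : Type*} [Field F] [DecidableEq F] {p : F[X]}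
    {s : Finset F} (hp : p.natDegree < #s) (x : F) :
    p.eval x = ∑ t ∈ s, (Lagrange.basis s id t).eval x * p.eval t := by
  have h := Lagrange.eq_interpolate (injOn_id (s : Set F))
    (degree_le_natDegree.trans_lt (by exact_mod_cast hp))
  conv_lhs => rw [h]
  simp [Lagrange.interpolate_apply, eval_finsetSum, mul_comm]

theorem exists_polynomial_eval_eq_integral {α : Type*} [MeasurableSpace α] {μ : Measure α}
    {P : α → ℝ[X]} {d : ℕ} (hd : ∀ x, (P x).natDegree ≤ d)
    (hint : ∀ t, Integrable (fun x ↦ (P x).eval t) μ) :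
    ∃ Q : ℝ[X], ∀ t, Q.eval t = ∫ x, (P x).eval t ∂μ := by
  obtain ⟨s, hs⟩ := Infinite.exists_subset_card_eq ℝ (d + 1)
  refine ⟨∑ t ∈ s, Lagrange.basis s id t * C (∫ x, (P x).eval t ∂μ), fun t ↦ ?_⟩
  have hP (x : α) : (P x).eval t = ∑ r ∈ s, (Lagrange.basis s id r).eval t * (P x).eval r :=
    eval_eq_sum_eval_lagrange_basis (hs ▸ Nat.lt_succ_of_le (hd x)) t
  simp_rw [hP]
  rw [integral_finsetSum _ fun r _ ↦ (hint r).const_mul _]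
  simp [eval_finsetSum, integral_const_mul]

theorem exists_polynomial_eval_eq_det_id_add_smul {R M : Type*} [CommRing R] [AddCommGroup M]
    [Module R M] [Module.Free R M] [Module.Finite R M] [Nontrivial R] (A : M →ₗ[R] M) :
    ∃ p : R[X], p.natDegree ≤ finrank R M ∧ ∀ t, p.eval t = (LinearMap.id + t • A).det := by
  let b := finBasis R M
  refine ⟨((X : R[X]) • (LinearMap.toMatrix b b A).map C
    + (1 : Matrix _ _ R).map C).det, ?_, fun t ↦ ?_⟩
  · simpa using natDegree_det_X_add_C_le (LinearMap.toMatrix b b A) 1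
  · rw [← LinearMap.det_toMatrix b, ← coe_evalRingHom, RingHom.map_det]
    congr 1
    ext i j
    simp [Matrix.one_apply, apply_ite, add_comm, mul_comm t]

end PolynomialFamilies

section PerturbedIdentity

theorem inter_frontier_nonempty_of_isPreconnected {X : Type*} [TopologicalSpace X] {u s : Set X}
    (hu : IsPreconnected u) (hs : (u ∩ s).Nonempty) (hsc : (u ∩ sᶜ).Nonempty) :
    (u ∩ frontier s).Nonempty := by
  by_contra hempty
  have hint {x} (hxu : x ∈ u) (hxs : x ∈ closure s) : x ∈ interior s :=
    by_contra fun hxi ↦ hempty ⟨x, hxu, hxs, hxi⟩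
  obtain ⟨x, hxu, hxs⟩ := hs
  obtain ⟨y, hyu, hys⟩ := hsc
  have hsub : u ⊆ interior s := hu.subset_of_closure_inter_subset isOpen_interior
    ⟨x, hxu, hint hxu (subset_closure hxs)⟩
    fun z hz ↦ hint hz.2 (closure_mono interior_subset hz.1)
  exact hys (interior_subset (hsub hyu))

variable {E : Type*} [NormedAddCommGroup E] [NormedSpace ℝ E]

theorem lipschitzWith_indicator_of_eqOn_frontier_zero {F : Type*} [NormedAddCommGroup F]
    {g : E → F} {s : Set E} {K : ℝ≥0} (hs : IsClosed s) (hg : LipschitzOnWith K g s)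
    (h0 : EqOn g 0 (frontier s)) : LipschitzWith K (s.indicator g) := by
  have hcross {x y} (hx : x ∈ s) (hy : y ∉ s) : dist (g x) 0 ≤ K * dist x y := by
    obtain ⟨z, hz, hzs⟩ := inter_frontier_nonempty_of_isPreconnected
      (convex_segment x y).isPreconnected ⟨x, left_mem_segment ℝ x y, hx⟩
      ⟨y, right_mem_segment ℝ x y, hy⟩
    calc dist (g x) 0 = dist (g x) (g z) := by rw [h0 hzs, Pi.zero_apply]
      _ ≤ K * dist x z := hg.dist_le_mul x hx z (hs.frontier_subset hzs)
      _ ≤ K * dist x y := by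
        gcongr
        linarith [dist_add_dist_of_mem_segment hz, dist_nonneg (x := z) (y := y)]
  refine LipschitzWith.of_dist_le_mul fun x y ↦ ?_
  by_cases hx : x ∈ s <;> by_cases hy : y ∈ s
  · simpa [hx, hy] using hg.dist_le_mul x hx y hy
  · simpa [hx, hy] using hcross hx hy
  · simpa [hx, hy, dist_comm] using hcross hy hx
  · simp only [hx, hy, not_false_eq_true, indicator_of_notMem, dist_self]; positivity

theorem bijective_id_add_of_lipschitzWith [CompleteSpace E] {G : E → E} {K : ℝ≥0}
    (hG : LipschitzWith K G) (hK : K < 1) : Function.Bijective (fun x ↦ x + G x) := by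
  have happrox : ApproximatesLinearOn (fun x ↦ x + G x)
      (ContinuousLinearEquiv.refl ℝ E : E →L[ℝ] E) univ K := by
    rw [ApproximatesLinearOn.approximatesLinearOn_iff_lipschitzOnWith, lipschitzOnWith_univ]
    convert! hG using 1
    ext x
    simp
  have hsmall : Subsingleton E ∨
      K < ‖((ContinuousLinearEquiv.refl ℝ E).symm : E →L[ℝ] E)‖₊⁻¹ := by
    rcases subsingleton_or_nontrivial E with hE | hE
    · exact Or.inl hE
    · have hone : ‖ContinuousLinearMap.id ℝ E‖₊ = 1 := NNReal.eq ContinuousLinearMap.norm_id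
      exact Or.inr (by simpa [hone] using hK)
  exact ⟨injOn_univ.1 (happrox.injOn hsmall), happrox.surjective hsmall⟩

theorem image_eq_self_of_bijective_of_eqOn_compl {α : Type*} {F : α → α} {s : Set α}
    (hF : F.Bijective) (hs : EqOn F id sᶜ) : F '' s = s := by
  rw [← compl_inj_iff, ← image_compl_eq hF, hs.image_eq, image_id]

end PerturbedIdentity

section VolumeIdentity

variable {E : Type*} [NormedAddCommGroup E] [NormedSpace ℝ E] {g : E → E} {s : Set E}

theorem eventually_forall_det_id_add_smul_fderiv_pos (hs : IsCompact s) (hg : ContDiff ℝ 1 g) :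
    ∀ᶠ t : ℝ in 𝓝 0, ∀ x ∈ s, 0 < (ContinuousLinearMap.id ℝ E + t • fderiv ℝ g x).det := by
  have hg' : Continuous (fderiv ℝ g) := hg.continuous_fderiv one_ne_zero
  have hdet : Continuous fun p : ℝ × E ↦
      (ContinuousLinearMap.id ℝ E + p.1 • fderiv ℝ g p.2).det :=
    ContinuousLinearMap.continuous_det.comp
      (continuous_const.add (continuous_fst.smul (hg'.comp continuous_snd)))
  refine hs.eventually_forall_of_forall_eventually fun x _ ↦
    (hdet.tendsto (0, x)).eventually_const_lt ?_
  simp [ContinuousLinearMap.det]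

theorem eventually_bijective_id_add_smul_indicator [CompleteSpace E] (hs : IsCompact s)
    (hg : ContDiff ℝ 1 g) (h0 : EqOn g 0 (frontier s)) :
    ∀ᶠ t : ℝ in 𝓝 0, Function.Bijective (fun x ↦ x + (t • s.indicator g) x) := by
  obtain ⟨K, hK⟩ :=
    (hg.locallyLipschitz.locallyLipschitzOn (s := s)).exists_lipschitzOnWith_of_compact hs
  have hlip := lipschitzWith_indicator_of_eqOn_frontier_zero hs.isClosed hK h0
  have hsmall : ∀ᶠ t : ℝ in 𝓝 0, ‖t‖₊ * K < 1 :=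
    (Continuous.tendsto' (by fun_prop) _ _ (by simp)).eventually_lt_const one_pos
  filter_upwards [hsmall] with t ht
  exact bijective_id_add_of_lipschitzWith ((lipschitzWith_smul t).comp hlip) ht

variable [FiniteDimensional ℝ E] [MeasurableSpace E] [BorelSpace E] (μ : Measure E)
  [μ.IsAddHaarMeasure]

theorem setIntegral_det_of_image_eq {F : E → E} {F' : E → E →L[ℝ] E} (hs : MeasurableSet s)
    (hF : ∀ x ∈ s, HasFDerivWithinAt F (F' x) s x) (hinj : InjOn F s) (himg : F '' s = s)
    (hpos : ∀ x ∈ s, 0 < (F' x).det) : ∫ x in s, (F' x).det ∂μ = μ.real s := by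
  calc ∫ x in s, (F' x).det ∂μ = ∫ x in s, |(F' x).det| • (1 : ℝ) ∂μ :=
        setIntegral_congr_fun hs fun x hx ↦ by simp [abs_of_pos (hpos x hx)]
    _ = ∫ _ in F '' s, (1 : ℝ) ∂μ :=
        (integral_image_eq_integral_abs_det_fderiv_smul μ hs hF hinj fun _ ↦ 1).symm
    _ = μ.real s := by simp [himg]

theorem eventually_setIntegral_det_id_add_smul_fderiv (hs : IsCompact s) (hg : ContDiff ℝ 1 g)
    (h0 : EqOn g 0 (frontier s)) :
    ∀ᶠ t : ℝ in 𝓝 0,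
      ∫ x in s, (ContinuousLinearMap.id ℝ E + t • fderiv ℝ g x).det ∂μ = μ.real s := by
  filter_upwards [eventually_bijective_id_add_smul_indicator hs hg h0,
    eventually_forall_det_id_add_smul_fderiv_pos hs hg] with t hbij hpos
  have hderiv (x) (hx : x ∈ s) : HasFDerivWithinAt (fun x ↦ x + (t • s.indicator g) x)
      (ContinuousLinearMap.id ℝ E + t • fderiv ℝ g x) s x := by
    have hfree : HasFDerivAt (fun y ↦ y + t • g y)
        (ContinuousLinearMap.id ℝ E + t • fderiv ℝ g x) x :=
      (hasFDerivAt_id x).add ((hg.differentiable one_ne_zero x).hasFDerivAt.const_smul t)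
    exact hfree.hasFDerivWithinAt.congr (fun y hy ↦ by simp [hy]) (by simp [hx])
  refine setIntegral_det_of_image_eq μ hs.measurableSet hderiv hbij.injective.injOn ?_ hpos
  exact image_eq_self_of_bijective_of_eqOn_compl hbij fun x hx ↦ by simp [notMem_of_mem_compl hx]

theorem setIntegral_det_fderiv_of_eqOn_frontier_id {f : E → E} (hs : IsCompact s)
    (hf : ContDiff ℝ 1 f) (hid : EqOn f id (frontier s)) :
    ∫ x in s, (fderiv ℝ f x).det ∂μ = μ.real s := by
  set g : E → E := f - id with hg_def
  have hg : ContDiff ℝ 1 g := hf.sub contDiff_id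
  have hg' : Continuous (fderiv ℝ g) := hg.continuous_fderiv one_ne_zero
  choose P hPdeg hPeval using fun x ↦
    exists_polynomial_eval_eq_det_id_add_smul (fderiv ℝ g x : E →ₗ[ℝ] E)
  have hPdet (x : E) (t : ℝ) :
      (P x).eval t = (ContinuousLinearMap.id ℝ E + t • fderiv ℝ g x).det := hPeval x t
  have hint (t : ℝ) : IntegrableOn (fun x ↦ (P x).eval t) s μ := by
    simp only [hPdet]
    have hdet : Continuous fun x ↦ (ContinuousLinearMap.id ℝ E + t • fderiv ℝ g x).det :=
      ContinuousLinearMap.continuous_det.comp (continuous_const.add (hg'.const_smul t))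
    exact hdet.continuousOn.integrableOn_compact hs
  obtain ⟨Q, hQ⟩ := exists_polynomial_eval_eq_integral hPdeg hint
  have hQconst : Q = C (μ.real s) := by
    refine Q.eq_of_infinite_eval_eq _ (infinite_of_mem_nhds (0 : ℝ) ?_)
    filter_upwards [eventually_setIntegral_det_id_add_smul_fderiv μ hs hg fun x hx ↦
      sub_eq_zero.2 (hid hx)] with t ht
    simp [hQ, hPdet, ht]
  have hfg (x : E) : fderiv ℝ f x = ContinuousLinearMap.id ℝ E + (1 : ℝ) • fderiv ℝ g x := by
    rw [hg_def, fderiv_sub (hf.differentiable one_ne_zero x) differentiableAt_id, fderiv_id]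
    simp
  simp_rw [hfg, ← hPdet, ← hQ, hQconst, eval_C]

end VolumeIdentity

section Retraction

variable {E : Type*}

theorem det_fderiv_eq_zero_of_norm_eq [NormedAddCommGroup E] [InnerProductSpace ℝ E]
    [FiniteDimensional ℝ E] {f : E → E} {r : ℝ} (hr : r ≠ 0) (hnorm : ∀ x, ‖f x‖ = r) {x : E}
    (hf : DifferentiableAt ℝ f x) : (fderiv ℝ f x).det = 0 := by
  by_contra hdet
  obtain ⟨w, hw⟩ := (LinearMap.equivOfDetNeZero (fderiv ℝ f x : E →ₗ[ℝ] E) hdet).surjective (f x)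
  replace hw : fderiv ℝ f x w = f x := hw
  have hconst : (‖f ·‖ ^ 2) = fun _ ↦ r ^ 2 := by simp [hnorm]
  have hzero := (hconst ▸ hf.hasFDerivAt.norm_sq).unique (hasFDerivAt_const (r ^ 2) x)
  have : ⟪f x, f x⟫_ℝ = 0 := by simpa [hw] using DFunLike.congr_fun hzero w
  exact hr (by rw [← hnorm x, inner_self_eq_zero.1 this, norm_zero])

theorem not_contDiff_retraction_sphere [NormedAddCommGroup E] [InnerProductSpace ℝ E]
    [FiniteDimensional ℝ E] {f : E → E} {r : ℝ} (hr : 0 < r) (hnorm : ∀ x, ‖f x‖ = r)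
    (hid : EqOn f id (Metric.sphere 0 r)) : ¬ ContDiff ℝ 1 f := by
  intro hf
  borelize E
  let μ : Measure E := Measure.addHaar
  have hvol := setIntegral_det_fderiv_of_eqOn_frontier_id μ (isCompact_closedBall 0 r) hf
    (hid.mono Metric.frontier_closedBall_subset_sphere)
  have hdet (x : E) : (fderiv ℝ f x).det = 0 :=
    det_fderiv_eq_zero_of_norm_eq hr.ne' hnorm (hf.differentiable one_ne_zero x)
  have hpos : 0 < μ.real (Metric.closedBall 0 r) :=
    ENNReal.toReal_pos (Metric.measure_closedBall_pos μ 0 hr).ne' measure_closedBall_lt_top.ne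
  simp [hdet, hpos.ne] at hvol

theorem exists_eq_zero_of_eqOn_sphere_id [NormedAddCommGroup E] [InnerProductSpace ℝ E]
    [FiniteDimensional ℝ E] {v : E → E} {r : ℝ} (hr : 0 < r) (hv : ContDiff ℝ 1 v)
    (hid : EqOn v id (Metric.sphere 0 r)) : ∃ x, v x = 0 := by
  by_contra! hne
  refine not_contDiff_retraction_sphere (f := fun x ↦ (r / ‖v x‖) • v x) hr (fun x ↦ ?_)
    (fun x hx ↦ ?_) ?_
  · rw [norm_smul, norm_div, norm_norm, Real.norm_of_nonneg hr.le,
      div_mul_cancel₀ _ (norm_ne_zero_iff.2 (hne x))]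
  · simp [hid hx, mem_sphere_zero_iff_norm.1 hx, hr.ne']
  · exact (contDiff_const.div (hv.norm ℝ hne) fun x ↦ norm_ne_zero_iff.2 (hne x)).smul hv

theorem exists_eq_zero_of_eventually_eq_self [NormedAddCommGroup E] [NormedSpace ℝ E]
    [FiniteDimensional ℝ E] {v : E → E} (hv : ContDiff ℝ 1 v)
    (hid : ∀ᶠ x in cocompact E, v x = x) : ∃ x, v x = 0 := by
  let e : E ≃L[ℝ] EuclideanSpace ℝ (Fin (finrank ℝ E)) := toEuclidean
  have hid' : ∀ᶠ y in cocompact _, e (v (e.symm y)) = y :=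
    (e.symm.toHomeomorph.isClosedEmbedding.tendsto_cocompact.eventually hid).mono
      fun y hy ↦ e.eq_symm_apply.1 hy
  rw [← Metric.cobounded_eq_cocompact,
    (Metric.hasBasis_cobounded_compl_closedBall 0).eventually_iff] at hid'
  obtain ⟨R, -, hR⟩ := hid'
  have hRr : R < max R 0 + 1 := by linarith [le_max_left R 0]
  obtain ⟨y, hy⟩ := exists_eq_zero_of_eqOn_sphere_id (v := e ∘ v ∘ e.symm)
    (by positivity : 0 < max R 0 + 1) (e.contDiff.comp (hv.comp e.symm.contDiff))
    fun y hy ↦ hR (by simpa [mem_sphere_zero_iff_norm.1 hy])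
  exact ⟨e.symm y, e.map_eq_zero_iff.1 hy⟩

end Retraction

section Selection

variable {E : Type*} [NormedAddCommGroup E] [NormedSpace ℝ E] [FiniteDimensional ℝ E]

theorem exists_zero_mem_convexHull {U : E → Set E} (hne : ∀ x, (U x).Nonempty)
    (hopen : ∀ u, IsOpen {x | u ∈ U x}) (hfar : ∀ᶠ x in cocompact E, x ∈ U x) :
    ∃ x, 0 ∈ convexHull ℝ (U x) := by
  classical
  obtain ⟨K, hK, hKU⟩ := mem_cocompact.1 hfar
  obtain ⟨L, hL, hKL⟩ := exists_compact_superset hK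
  let t (x : E) : Set E := if x ∈ L then convexHull ℝ (U x) else {x}
  have ht_near {x} (hx : x ∈ L) : t x = convexHull ℝ (U x) := if_pos hx
  have ht_far {x} (hx : x ∉ L) : t x = {x} := if_neg hx
  have htconv (x : E) : Convex ℝ (t x) := by
    by_cases hx : x ∈ L
    · exact ht_near hx ▸ convex_convexHull ℝ (U x)
    · exact ht_far hx ▸ convex_singleton x
  have htlocal (x : E) : ∃ V ∈ 𝓝 x, ∃ g : E → E,
      ContMDiffOn 𝓘(ℝ, E) 𝓘(ℝ, E) (1 : ℕ∞) g V ∧ ∀ y ∈ V, g y ∈ t y := by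
    by_cases hx : x ∈ K
    · obtain ⟨u, hu⟩ := hne x
      refine ⟨interior L ∩ {y | u ∈ U y}, inter_mem (isOpen_interior.mem_nhds (hKL hx))
        ((hopen u).mem_nhds hu), fun _ ↦ u, contMDiffOn_const, fun y hy ↦ ?_⟩
      exact ht_near (interior_subset hy.1) ▸ subset_convexHull ℝ (U y) hy.2
    · refine ⟨Kᶜ, hK.isClosed.isOpen_compl.mem_nhds hx, id, contMDiffOn_id, fun y hy ↦ ?_⟩
      by_cases hyL : y ∈ L
      · exact ht_near hyL ▸ subset_convexHull ℝ (U y) (hKU hy)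
      · exact ht_far hyL ▸ mem_singleton y
  obtain ⟨v, hv⟩ := exists_contMDiffMap_forall_mem_convex_of_local 𝓘(ℝ, E) htconv htlocal
  have hv_far {x} (hx : x ∉ L) : v x = x := mem_singleton_iff.1 (ht_far hx ▸ hv x)
  obtain ⟨x, hx⟩ := exists_eq_zero_of_eventually_eq_self v.contMDiff.contDiff
    (mem_of_superset hL.compl_mem_cocompact fun _ ↦ hv_far)
  refine ⟨x, ?_⟩
  by_cases hxL : x ∈ L
  · exact hx ▸ ht_near hxL ▸ hv x
  · have hx0 : x = 0 := (hv_far hxL).symm.trans hx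
    exact subset_convexHull ℝ (U x) (hx0 ▸ hKU fun hxK ↦ hxL (interior_subset (hKL hxK)))

end Selection

section Arrangement

variable {E ι : Type*} [NormedAddCommGroup E] [NormedSpace ℝ E]

/-- The indices of the hyperplanes `{y | ℓ i y = c i}` met by the ray from `x` in direction `u`. -/
def rayMeets (ℓ : ι → StrongDual ℝ E) (c : ι → ℝ) (x u : E) : Set ι :=
  {i | ∃ t : ℝ, 0 ≤ t ∧ ℓ i (x + t • u) = c i}

/-- The indices of the hyperplanes `{y | ℓ i y = c i}` from which the ray from `x` in direction `u`
does not move strictly away. Unlike `rayMeets` this includes the hyperplanes parallel to `u`, which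
makes it upper semicontinuous in `(x, u)`. -/
noncomputable def approached [Fintype ι] (ℓ : ι → StrongDual ℝ E) (c : ι → ℝ) (x u : E) :
    Finset ι :=
  {i | 0 ≤ (c i - ℓ i x) * ℓ i u}

/-- The functionals `ℓ i` are in linear general position: any `dim E` of them have only `0` as a
common zero. -/
def LinearGeneralPosition (ℓ : ι → StrongDual ℝ E) : Prop :=
  ∀ T : Finset ι, #T = finrank ℝ E → ∀ y, (∀ i ∈ T, ℓ i y = 0) → y = 0

variable {ℓ : ι → StrongDual ℝ E} {c : ι → ℝ} {x u : E}

section Approached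

variable [Fintype ι]

theorem mem_approached {i : ι} : i ∈ approached ℓ c x u ↔ 0 ≤ (c i - ℓ i x) * ℓ i u :=
  Finset.mem_filter_univ i

theorem abs_le_abs_of_mem_approached_self {i : ι} (hi : i ∈ approached ℓ c x x) :
    |ℓ i x| ≤ |c i| :=
  sq_le_sq.1 (by nlinarith [mem_approached.1 hi, sq_nonneg (c i - ℓ i x)])

theorem eventually_approached_subset (ℓ : ι → StrongDual ℝ E) (c : ι → ℝ) (x u : E) :
    ∀ᶠ p in 𝓝 (x, u), approached ℓ c p.1 p.2 ⊆ approached ℓ c x u := by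
  have hneg : ∀ᶠ p in 𝓝 (x, u), ∀ i,
      (c i - ℓ i x) * ℓ i u < 0 → (c i - ℓ i p.1) * ℓ i p.2 < 0 := by
    refine eventually_all.2 fun i ↦ eventually_imp_distrib_left.2 fun hi ↦ ?_
    have hcont : Continuous fun p : E × E ↦ (c i - ℓ i p.1) * ℓ i p.2 := by fun_prop
    exact (hcont.tendsto (x, u)).eventually_lt_const hi
  filter_upwards [hneg] with p hp i hi
  rw [mem_approached] at hi ⊢
  exact not_lt.1 fun h ↦ hi.not_gt (hp i h)

theorem exists_mem_approached_of_zero_mem_convexHull {S : Set E} (hS : 0 ∈ convexHull ℝ S)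
    (ℓ : ι → StrongDual ℝ E) (c : ι → ℝ) (x : E) (i : ι) : ∃ u ∈ S, i ∈ approached ℓ c x u := by
  by_contra! hall
  have hlin : IsLinearMap ℝ fun u ↦ (c i - ℓ i x) * ℓ i u :=
    ((c i - ℓ i x) • (ℓ i : E →ₗ[ℝ] ℝ)).isLinear
  have hsub : S ⊆ {u | (c i - ℓ i x) * ℓ i u < 0} := fun u hu ↦
    not_le.1 (mt mem_approached.2 (hall u hu))
  simpa using convexHull_min hsub (convex_halfSpace_lt hlin 0) hS

theorem exists_card_le_mul_card_approached_of_zero_mem_convexHull [FiniteDimensional ℝ E]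
    {S : Set E} (hS : 0 ∈ convexHull ℝ S) (ℓ : ι → StrongDual ℝ E) (c : ι → ℝ) (x : E) :
    ∃ u ∈ S, Fintype.card ι ≤ (finrank ℝ E + 1) * #(approached ℓ c x u) := by
  classical
  let F := Caratheodory.minCardFinsetOfMemConvexHull hS
  have hF0 : 0 ∈ convexHull ℝ (F : Set E) := Caratheodory.mem_minCardFinsetOfMemConvexHull hS
  have hFS : (F : Set E) ⊆ S := Caratheodory.minCardFinsetOfMemConvexHull_subseteq hS
  have hFne : F.Nonempty := Finset.coe_nonempty.1 (convexHull_nonempty_iff.1 ⟨0, hF0⟩)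
  have hFcard : #F ≤ finrank ℝ E + 1 := by
    have h := (Caratheodory.affineIndependent_minCardFinsetOfMemConvexHull hS).card_le_finrank_succ
    rw [Fintype.card_coe] at h
    exact h.trans (Nat.succ_le_succ (Submodule.finrank_le _))
  have hcover : Finset.univ ⊆ F.biUnion (approached ℓ c x) := fun i _ ↦
    Finset.mem_biUnion.2 (exists_mem_approached_of_zero_mem_convexHull hF0 ℓ c x i)
  have hsum : ∑ _u ∈ F, Fintype.card ι ≤ ∑ u ∈ F, (finrank ℝ E + 1) * #(approached ℓ c x u) :=
    calc ∑ _u ∈ F, Fintype.card ι = #F * Fintype.card ι := by rw [Finset.sum_const, smul_eq_mul]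
      _ ≤ (finrank ℝ E + 1) * ∑ u ∈ F, #(approached ℓ c x u) :=
        Nat.mul_le_mul hFcard ((Finset.card_le_card hcover).trans Finset.card_biUnion_le)
      _ = ∑ u ∈ F, (finrank ℝ E + 1) * #(approached ℓ c x u) := Finset.mul_sum ..
  obtain ⟨u, huF, hu⟩ := Finset.exists_le_of_sum_le hFne hsum
  exact ⟨u, hFS huF, hu⟩

end Approached

namespace LinearGeneralPosition

variable (hℓ : LinearGeneralPosition ℓ)
include hℓ

theorem injective_pi {T : Finset ι} (hT : #T = finrank ℝ E) :
    Function.Injective (LinearMap.pi fun i : T ↦ (ℓ i : E →ₗ[ℝ] ℝ)) :=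
  (injective_iff_map_eq_zero _).2 fun y hy ↦ hℓ T hT y fun i hi ↦ congrFun hy ⟨i, hi⟩

variable [FiniteDimensional ℝ E] [Fintype ι]

theorem exists_forall_mem_eq (hcard : finrank ℝ E ≤ Fintype.card ι) {Z : Finset ι}
    (hZ : #Z ≤ finrank ℝ E) (s : ι → ℝ) : ∃ w, ∀ i ∈ Z, ℓ i w = s i := by
  obtain ⟨T, hZT, -, hT⟩ := Finset.exists_subsuperset_card_eq (Finset.subset_univ Z) hZ hcard
  have hsurj := (LinearMap.injective_iff_surjective_of_finrank_eq_finrank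
    (by simp [hT])).1 (hℓ.injective_pi hT)
  obtain ⟨w, hw⟩ := hsurj fun i ↦ s i
  exact ⟨w, fun i hi ↦ congrFun hw ⟨i, hZT hi⟩⟩

theorem eventually_card_approached_self_lt (c : ι → ℝ) :
    ∀ᶠ x in cocompact E, #(approached ℓ c x x) < finrank ℝ E := by
  have hfar (T : Finset ι) (hT : #T = finrank ℝ E) :
      ∀ᶠ x in cocompact E, ¬ ∀ i ∈ T, |ℓ i x| ≤ |c i| := by
    have hcompact := (LinearMap.isClosedEmbedding_of_injective
      (LinearMap.ker_eq_bot.2 (hℓ.injective_pi hT))).isCompact_preimage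
      (isCompact_univ_pi fun i : T ↦ isCompact_Icc (a := -|c i|) (b := |c i|))
    filter_upwards [hcompact.compl_mem_cocompact] with x hx hall
    exact hx fun i _ ↦ abs_le.1 (hall i i.2)
  have hfar' : ∀ᶠ x in cocompact E, ∀ T : Finset ι, #T = finrank ℝ E →
      ¬ ∀ i ∈ T, |ℓ i x| ≤ |c i| :=
    eventually_all.2 fun T ↦ eventually_imp_distrib_left.2 (hfar T)
  filter_upwards [hfar'] with x hx
  by_contra! hcard
  obtain ⟨T, hTsub, hT⟩ := Finset.exists_subset_card_eq hcard
  exact hx T hT fun i hi ↦ abs_le_abs_of_mem_approached_self (hTsub hi)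

theorem exists_forall_card_le_mul_card_approached (hcard : finrank ℝ E ^ 2 ≤ Fintype.card ι)
    (c : ι → ℝ) :
    ∃ x, ∀ u, Fintype.card ι ≤ (finrank ℝ E + 1) * #(approached ℓ c x u) := by
  by_contra! hne
  let U (x : E) : Set E := {u | (finrank ℝ E + 1) * #(approached ℓ c x u) < Fintype.card ι}
  have hopen (u : E) : IsOpen {x | u ∈ U x} := isOpen_iff_eventually.2 fun x hx ↦ by
    have hsub := (Continuous.tendsto (f := fun y ↦ (y, u)) (by fun_prop) x).eventually
      (eventually_approached_subset ℓ c x u)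
    filter_upwards [hsub] with y hy
    exact (Nat.mul_le_mul_left _ (Finset.card_le_card hy)).trans_lt hx
  have hfar : ∀ᶠ x in cocompact E, x ∈ U x := by
    filter_upwards [hℓ.eventually_card_approached_self_lt c] with x hx
    refine lt_of_lt_of_le ?_ hcard
    nlinarith
  obtain ⟨x, hx⟩ := exists_zero_mem_convexHull hne hopen hfar
  obtain ⟨u, hu, hle⟩ := exists_card_le_mul_card_approached_of_zero_mem_convexHull hx ℓ c x
  exact hle.not_gt hu

theorem exists_approached_subset_rayMeets (hcard : finrank ℝ E ≤ Fintype.card ι) (c : ι → ℝ)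
    (x : E) (hu : u ≠ 0) : ∃ v, ↑(approached ℓ c x v) ⊆ rayMeets ℓ c x u := by
  let Z : Finset ι := {i | ℓ i u = 0}
  have hZ : #Z ≤ finrank ℝ E := by
    by_contra! hlt
    obtain ⟨T, hTZ, hT⟩ := Finset.exists_subset_card_eq hlt.le
    exact hu (hℓ T hT u fun i hi ↦ (Finset.mem_filter_univ i).1 (hTZ hi))
  -- Perturbing `u` by `w` strictly leaves every parallel hyperplane that does not contain `x`.
  obtain ⟨w, hw⟩ := hℓ.exists_forall_mem_eq hcard hZ fun i ↦ -(c i - ℓ i x)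
  have hsmall : ∀ᶠ ε : ℝ in 𝓝[>] 0, approached ℓ c x (u + ε • w) ⊆ approached ℓ c x u :=
    ((Continuous.tendsto' (f := fun ε : ℝ ↦ (x, u + ε • w)) (by fun_prop) 0 (x, u)
      (by simp)).mono_left nhdsWithin_le_nhds).eventually (eventually_approached_subset ℓ c x u)
  obtain ⟨ε, hsub, hε : 0 < ε⟩ := (hsmall.and self_mem_nhdsWithin).exists
  refine ⟨u + ε • w, fun i hi ↦ ?_⟩
  by_cases hiu : ℓ i u = 0
  · have hwi : ℓ i w = -(c i - ℓ i x) := hw i ((Finset.mem_filter_univ i).2 hiu)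
    have hle : 0 ≤ -(ε * (c i - ℓ i x) ^ 2) :=
      calc 0 ≤ (c i - ℓ i x) * ℓ i (u + ε • w) := mem_approached.1 hi
        _ = -(ε * (c i - ℓ i x) ^ 2) := by
          rw [map_add, map_smul, hiu, hwi, smul_eq_mul]; ring
    have hxi : c i - ℓ i x = 0 := pow_eq_zero_iff two_ne_zero |>.1 <|
      le_antisymm (nonpos_of_mul_nonpos_right (neg_nonneg.1 hle) hε) (sq_nonneg _)
    exact ⟨0, le_rfl, by simpa using (sub_eq_zero.1 hxi).symm⟩
  · refine ⟨(c i - ℓ i x) / ℓ i u, ?_, by simp [hiu]⟩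
    exact div_nonneg_iff.2 (mul_nonneg_iff.1 (mem_approached.1 (hsub hi)))

end LinearGeneralPosition

theorem linearGeneralPosition_of_existsUnique
    (hgp : ∀ T : Finset ι, #T = finrank ℝ E → ∃! x, ∀ i ∈ T, ℓ i x = c i) :
    LinearGeneralPosition ℓ := by
  intro T hT y hy
  obtain ⟨x, hx, huniq⟩ := hgp T hT
  simpa using huniq (x + y) fun i hi ↦ by simp [hx i hi, hy i hi]

theorem exists_card_le_and_forall_mem_eq [Fintype ι] (hℓ : ∀ i, ℓ i ≠ 0)
    (hgp : ∀ T : Finset ι, #T = finrank ℝ E → ∃! x, ∀ i ∈ T, ℓ i x = c i)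
    (hcard : Fintype.card ι < finrank ℝ E ^ 2) :
    ∃ (T : Finset ι) (x : E),
      (Fintype.card ι + finrank ℝ E) / (finrank ℝ E + 1) ≤ #T ∧ ∀ i ∈ T, ℓ i x = c i := by
  rcases le_or_gt (finrank ℝ E) (Fintype.card ι) with hle | hlt
  · obtain ⟨T, -, hT⟩ := Finset.exists_subset_card_eq (hle.trans_eq Finset.card_univ.symm)
    obtain ⟨x, hx, -⟩ := hgp T hT
    refine ⟨T, x, hT ▸ Nat.le_of_lt_succ (Nat.div_lt_of_lt_mul ?_), hx⟩
    rw [hT]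
    nlinarith
  · rcases isEmpty_or_nonempty ι with hι | ⟨⟨i⟩⟩
    · exact ⟨∅, 0, by simp, by simp⟩
    · have hi : (ℓ i : E →ₗ[ℝ] ℝ) ≠ 0 := by exact_mod_cast hℓ i
      obtain ⟨x, hx⟩ := LinearMap.surjective hi (c i)
      refine ⟨{i}, x, Nat.le_of_lt_succ (Nat.div_lt_of_lt_mul ?_), by simpa using hx⟩
      simp only [Finset.card_singleton]
      omega

variable [FiniteDimensional ℝ E] [Fintype ι]

theorem exists_forall_le_ncard_rayMeets (hℓ : ∀ i, ℓ i ≠ 0)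
    (hgp : ∀ T : Finset ι, #T = finrank ℝ E → ∃! x, ∀ i ∈ T, ℓ i x = c i) :
    ∃ x, ∀ u ≠ 0,
      (Fintype.card ι + finrank ℝ E) / (finrank ℝ E + 1) ≤ (rayMeets ℓ c x u).ncard := by
  have hlin := linearGeneralPosition_of_existsUnique hgp
  rcases lt_or_ge (Fintype.card ι) (finrank ℝ E ^ 2) with hlt | hge
  · obtain ⟨T, x, hT, hx⟩ := exists_card_le_and_forall_mem_eq hℓ hgp hlt
    refine ⟨x, fun u _ ↦ hT.trans ?_⟩
    rw [← ncard_coe_finset]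
    exact ncard_le_ncard fun i hi ↦ ⟨0, le_rfl, by simpa using hx i hi⟩
  · obtain ⟨x, hx⟩ := hlin.exists_forall_card_le_mul_card_approached hge c
    refine ⟨x, fun u hu ↦ ?_⟩
    obtain ⟨v, hv⟩ := hlin.exists_approached_subset_rayMeets
      ((Nat.le_self_pow two_ne_zero _).trans hge) c x hu
    calc (Fintype.card ι + finrank ℝ E) / (finrank ℝ E + 1) ≤ #(approached ℓ c x v) :=
          Nat.le_of_lt_succ (Nat.div_lt_of_lt_mul (by linarith [hx v]))
      _ ≤ (rayMeets ℓ c x u).ncard := by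
          rw [← ncard_coe_finset]; exact ncard_le_ncard hv

theorem dual_central_point_general {H : ι → Set E}
    (hH : ∀ i, ∃ (ℓ : StrongDual ℝ E) (c : ℝ), ℓ ≠ 0 ∧ H i = {y | ℓ y = c})
    (hgp : ∀ T : Finset ι, #T = finrank ℝ E → ∃! x, ∀ i ∈ T, x ∈ H i) :
    ∃ x, ∀ u ≠ 0, (Fintype.card ι + finrank ℝ E) / (finrank ℝ E + 1) ≤
      {i | ∃ t : ℝ, 0 ≤ t ∧ x + t • u ∈ H i}.ncard := by
  choose ℓ c hℓ hHc using hH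
  obtain rfl : H = fun i ↦ {y | ℓ i y = c i} := funext hHc
  exact exists_forall_le_ncard_rayMeets hℓ hgp

end Arrangement

theorem IsHyperplane.exists_strongDual {d : ℕ} {h : Set (EuclideanSpace ℝ (Fin d))}
    (hh : IsHyperplane h) :
    ∃ (ℓ : StrongDual ℝ (EuclideanSpace ℝ (Fin d))) (c : ℝ), ℓ ≠ 0 ∧ h = {y | ℓ y = c} := by
  obtain ⟨v, c, hv, rfl⟩ := hh
  exact ⟨innerSLFlip ℝ v, c, fun h0 ↦ hv (inner_self_eq_zero.1 (DFunLike.congr_fun h0 v)), rfl⟩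

theorem ray_inter_nonempty_iff {d : ℕ} {x u : EuclideanSpace ℝ (Fin d)}
    {h : Set (EuclideanSpace ℝ (Fin d))} :
    (Ray x u ∩ h).Nonempty ↔ ∃ t : ℝ, 0 ≤ t ∧ x + t • u ∈ h := by
  constructor
  · rintro ⟨_, ⟨t, ht, rfl⟩, hmem⟩
    exact ⟨t, ht, hmem⟩
  · rintro ⟨t, ht, hmem⟩
    exact ⟨_, ⟨t, ht, rfl⟩, hmem⟩

/-- The dual central point theorem (discrete case). -/
theorem dual_central_point (d n : ℕ) (hd : 1 ≤ d)
    (H : Fin n → Set (EuclideanSpace ℝ (Fin d)))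
    (hH : ∀ i, IsHyperplane (H i))
    (hgp : InGeneralPosition H) :
    ∃ x : EuclideanSpace ℝ (Fin d), ∀ u : EuclideanSpace ℝ (Fin d), ‖u‖ = 1 →
      (n + d) / (d + 1) ≤ {i : Fin n | (Ray x u ∩ H i).Nonempty}.ncard := by
  obtain ⟨x, hx⟩ := dual_central_point_general (fun i ↦ (hH i).exists_strongDual)
    (by simpa using hgp.1)
  exact ⟨x, fun u hu ↦ by
    simpa [ray_inter_nonempty_iff] using hx u (norm_ne_zero_iff.1 (hu ▸ one_ne_zero))⟩
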